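/- arXiv:1310.2816 — 3 statements merged into one kernel-verified Lean document; each statement's English description precedes it below -/
import Mathlib

section
/- For every real number a, ∫_0^∞ (2πλ)^{−1/2} · exp(−a²/(2λ) − λ/2) dλ = exp(−|a|). -/
open MeasureTheory Real

/-!
Writing `l = t²` turns the integral into `√(2 / π) ∫ exp (-a² / (2 t²) - t² / 2) dt` over `t > 0`,
and completing the square makes the exponent `-(t - |a| / t)² / 2 - |a|`. The Cauchy–Schlömilch
identity `∫ f (t - b / t) dt = ∫ f t dt` for even `f` reduces what is left to a half-line Gaussian
integral. The identity itself holds because `t ↦ b / t` reverses the sign of `t - b / t`: averaging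
the integral with its image under this substitution replaces `dt` by `(1 + b / t²) dt / 2`, which is
half of the differential of `t - b / t`.
-/

section CauchySchlomilch

open Set

variable {E : Type*} [NormedAddCommGroup E] [NormedSpace ℝ E] {b : ℝ}

lemma hasDerivAt_id_sub_const_div (b : ℝ) {t : ℝ} (ht : t ≠ 0) :
    HasDerivAt (fun t ↦ t - b / t) (1 + b / t ^ 2) t := by
  simpa [div_eq_mul_inv] using (hasDerivAt_id' t).fun_sub ((hasDerivAt_inv ht).const_mul b)

lemma monotoneOn_id_sub_const_div (hb : 0 ≤ b) : MonotoneOn (fun t ↦ t - b / t) (Ioi 0) := by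
  intro s hs t _ hst
  have hs : 0 < s := hs
  dsimp only
  gcongr

lemma image_id_sub_const_div_Ioi (hb : 0 < b) : (fun t ↦ t - b / t) '' Ioi 0 = univ := by
  refine eq_univ_of_forall fun u ↦ ?_
  have hsqrt : √(u ^ 2 + 4 * b) ^ 2 = u ^ 2 + 4 * b := sq_sqrt (by positivity)
  have habs : |u| < √(u ^ 2 + 4 * b) := by
    rw [lt_sqrt (abs_nonneg u), sq_abs]
    linarith
  have hpos : 0 < u + √(u ^ 2 + 4 * b) := by linarith [neg_abs_le u]
  refine ⟨(u + √(u ^ 2 + 4 * b)) / 2, half_pos hpos, ?_⟩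
  field_simp
  linarith

lemma integrableOn_Ioi_deriv_smul_comp_id_sub_const_div_iff (hb : 0 < b) (f : ℝ → E) :
    IntegrableOn (fun t ↦ (1 + b / t ^ 2) • f (t - b / t)) (Ioi 0) ↔ Integrable f := by
  rw [← integrableOn_univ, ← image_id_sub_const_div_Ioi hb]
  exact (integrableOn_image_iff_integrableOn_deriv_smul_of_monotoneOn measurableSet_Ioi
    (fun t ht ↦ (hasDerivAt_id_sub_const_div b (ne_of_gt ht)).hasDerivWithinAt)
    (monotoneOn_id_sub_const_div hb.le) f).symm

lemma integral_Ioi_deriv_smul_comp_id_sub_const_div (hb : 0 < b) (f : ℝ → E) :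
    ∫ t in Ioi 0, (1 + b / t ^ 2) • f (t - b / t) = ∫ u, f u := by
  rw [← setIntegral_univ (f := f), ← image_id_sub_const_div_Ioi hb]
  exact (integral_image_eq_integral_deriv_smul_of_monotoneOn measurableSet_Ioi
    (fun t ht ↦ (hasDerivAt_id_sub_const_div b (ne_of_gt ht)).hasDerivWithinAt)
    (monotoneOn_id_sub_const_div hb.le) f).symm

lemma integral_Ioi_const_div_sq_smul_comp_const_div (hb : 0 < b) (g : ℝ → E) :
    ∫ t in Ioi 0, (b / t ^ 2) • g (b / t) = ∫ t in Ioi 0, g t := by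
  have himage : (fun t ↦ b / t) '' Ioi 0 = Ioi 0 := by
    ext s
    refine ⟨?_, fun hs ↦ ⟨b / s, div_pos hb hs, div_div_cancel₀ hb.ne'⟩⟩
    rintro ⟨t, ht, rfl⟩
    exact div_pos hb ht
  have hderiv : ∀ t ∈ Ioi (0 : ℝ), HasDerivWithinAt (fun t ↦ b / t) (-(b / t ^ 2)) (Ioi 0) t := by
    intro t ht
    simpa [div_eq_mul_inv] using ((hasDerivAt_inv (ne_of_gt ht)).const_mul b).hasDerivWithinAt
  have hanti : AntitoneOn (fun t ↦ b / t) (Ioi 0) := fun s hs t _ hst ↦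
    div_le_div_of_nonneg_left hb.le hs hst
  conv_rhs => rw [← himage]
  simpa only [neg_neg] using
    (integral_image_eq_integral_deriv_smul_of_antitoneOn measurableSet_Ioi hderiv hanti g).symm

lemma integral_Ioi_const_div_sq_smul_comp_id_sub_const_div_of_even {f : ℝ → E} (hf : f.Even)
    (hb : 0 < b) : ∫ t in Ioi 0, (b / t ^ 2) • f (t - b / t) = ∫ t in Ioi 0, f (t - b / t) := by
  rw [← integral_Ioi_const_div_sq_smul_comp_const_div hb]
  refine setIntegral_congr_fun measurableSet_Ioi fun t ht ↦ ?_
  have hcancel : b / t ^ 2 * (b / (b / t) ^ 2) = 1 := by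
    have ht : t ≠ 0 := ne_of_gt ht
    field_simp
  rw [div_div_cancel₀ hb.ne', ← neg_sub, hf, smul_smul, hcancel, one_smul]

lemma integrableOn_Ioi_comp_id_sub_const_div {f : ℝ → E} (hf : Integrable f) (hb : 0 ≤ b) :
    IntegrableOn (fun t ↦ f (t - b / t)) (Ioi 0) := by
  obtain rfl | hb := hb.eq_or_lt
  · simpa using hf.integrableOn
  have hbound (t : ℝ) : ‖(1 + b / t ^ 2)⁻¹‖ ≤ 1 := by
    rw [norm_of_nonneg (by positivity)]
    exact inv_le_one_of_one_le₀ (le_add_of_nonneg_right (by positivity))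
  have hmeas : Measurable fun t : ℝ ↦ (1 + b / t ^ 2)⁻¹ := by fun_prop
  refine (((integrableOn_Ioi_deriv_smul_comp_id_sub_const_div_iff hb f).2 hf).bdd_smul 1
    hmeas.aestronglyMeasurable (ae_of_all _ hbound)).congr (ae_of_all _ fun t ↦ ?_)
  exact inv_smul_smul₀ (by positivity) _

lemma integral_eq_two_smul_integral_Ioi_of_even {f : ℝ → E} (hf : f.Even) (hfi : Integrable f) :
    ∫ t, f t = (2 : ℝ) • ∫ t in Ioi 0, f t := by
  have hneg : ∫ t in Iic 0, f t = ∫ t in Ioi 0, f t := by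
    simpa [hf _] using integral_comp_neg_Iic 0 f
  rw [← intervalIntegral.integral_Iic_add_Ioi hfi.integrableOn hfi.integrableOn, hneg, two_smul]

theorem integral_Ioi_comp_id_sub_const_div_of_even {f : ℝ → E} (hf : f.Even) (hfi : Integrable f)
    (hb : 0 ≤ b) : ∫ t in Ioi 0, f (t - b / t) = ∫ t in Ioi 0, f t := by
  obtain rfl | hb := hb.eq_or_lt
  · simp
  have hfi_comp := integrableOn_Ioi_comp_id_sub_const_div hfi hb.le
  have hfi_div_sq : IntegrableOn (fun t ↦ (b / t ^ 2) • f (t - b / t)) (Ioi 0) := by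
    simpa [add_smul, Pi.sub_def] using
      ((integrableOn_Ioi_deriv_smul_comp_id_sub_const_div_iff hb f).2 hfi).sub hfi_comp
  refine smul_right_injective E (two_ne_zero' ℝ) ?_
  calc (2 : ℝ) • ∫ t in Ioi 0, f (t - b / t)
      = (∫ t in Ioi 0, f (t - b / t)) + ∫ t in Ioi 0, (b / t ^ 2) • f (t - b / t) := by
        rw [integral_Ioi_const_div_sq_smul_comp_id_sub_const_div_of_even hf hb, two_smul]
    _ = ∫ t in Ioi 0, (1 + b / t ^ 2) • f (t - b / t) := by
        simp only [add_smul, one_smul, integral_add hfi_comp hfi_div_sq]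
    _ = (2 : ℝ) • ∫ t in Ioi 0, f t := by
        rw [integral_Ioi_deriv_smul_comp_id_sub_const_div hb,
          integral_eq_two_smul_integral_Ioi_of_even hf hfi]

end CauchySchlomilch

section Gaussian

open Set

variable {p q : ℝ}

theorem integral_Ioi_exp_neg_mul_sq_sub_div_sq (hp : 0 < p) (hq : 0 ≤ q) :
    ∫ t in Ioi (0 : ℝ), exp (-p * t ^ 2 - q / t ^ 2) = √(π / p) / 2 * exp (-2 * √(p * q)) := by
  have hsquare : ∀ t ∈ Ioi (0 : ℝ), exp (-p * t ^ 2 - q / t ^ 2) =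
      exp (-p * (t - √(q / p) / t) ^ 2) * exp (-2 * √(p * q)) := by
    intro t ht
    have ht : t ≠ 0 := ne_of_gt ht
    have hcross : √(p * q) = p * √(q / p) := by
      rw [show p * q = p ^ 2 * (q / p) by field_simp, sqrt_mul (sq_nonneg p), sqrt_sq hp.le]
    have hqp : p * √(q / p) ^ 2 = q := by
      rw [sq_sqrt (by positivity)]
      field_simp
    rw [← exp_add, hcross]
    congr 1
    field_simp
    linear_combination hqp
  have heven : Function.Even fun t ↦ exp (-p * t ^ 2) := fun t ↦ by simp only [neg_sq]
  rw [setIntegral_congr_fun measurableSet_Ioi hsquare, integral_mul_const,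
    integral_Ioi_comp_id_sub_const_div_of_even heven (integrable_exp_neg_mul_sq hp) (sqrt_nonneg _),
    integral_gaussian_Ioi]

theorem integral_Ioi_inv_sqrt_mul_exp_neg_mul_sub_div (hp : 0 < p) (hq : 0 ≤ q) :
    ∫ l in Ioi (0 : ℝ), (√l)⁻¹ * exp (-p * l - q / l) = √(π / p) * exp (-2 * √(p * q)) := by
  have hsubst : ∀ t ∈ Ioi (0 : ℝ),
      (2 * t ^ ((2 : ℝ) - 1)) • ((√(t ^ (2 : ℝ)))⁻¹ * exp (-p * t ^ (2 : ℝ) - q / t ^ (2 : ℝ))) =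
        2 * exp (-p * t ^ 2 - q / t ^ 2) := by
    intro t ht
    have ht : 0 < t := ht
    rw [show (2 : ℝ) - 1 = 1 by norm_num, rpow_one, rpow_two, sqrt_sq ht.le, smul_eq_mul]
    field_simp
  rw [← integral_comp_rpow_Ioi_of_pos two_pos, setIntegral_congr_fun measurableSet_Ioi hsubst,
    integral_const_mul, integral_Ioi_exp_neg_mul_sq_sub_div_sq hp hq]
  ring

end Gaussian

/-- For every real `a`,
`∫_0^∞ (2πλ)^{-1/2} exp(-a²/(2λ) - λ/2) dλ = exp(-|a|)`. -/
theorem scale_mixture_integral (a : ℝ) :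
    ∫ l in Set.Ioi (0 : ℝ),
      (1 / Real.sqrt (2 * Real.pi * l)) * Real.exp (-a ^ 2 / (2 * l) - l / 2)
      = Real.exp (-|a|) := by
  have hintegrand (l : ℝ) : 1 / √(2 * π * l) * exp (-a ^ 2 / (2 * l) - l / 2) =
      (√(2 * π))⁻¹ * ((√l)⁻¹ * exp (-(1 / 2) * l - a ^ 2 / 2 / l)) := by
    rw [sqrt_mul (by positivity), one_div, mul_inv, mul_assoc]
    ring_nf
  have hsqrt : √(1 / 2 * (a ^ 2 / 2)) = |a| / 2 := by
    rw [show 1 / 2 * (a ^ 2 / 2) = (a / 2) ^ 2 by ring, sqrt_sq_eq_abs, abs_div, abs_two]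
  simp only [hintegrand]
  rw [integral_const_mul,
    integral_Ioi_inv_sqrt_mul_exp_neg_mul_sub_div (by positivity) (by positivity), hsqrt,
    show π / (1 / 2) = 2 * π by ring, inv_mul_cancel_left₀ (by positivity)]
  ring_nf
end

section
/- For every c ≥ 0 and every ζ ∈ ℝ, exp(−2c·max(0, ζ)) = ∫_0^∞ (2πλ)^{−1/2} · exp(−(λ + cζ)²/(2λ)) dλ. -/
open MeasureTheory Real

/-!
Substituting `l = s ^ 2` turns `(l - b) ^ 2 / (2 * l)` into `(s - b / s) ^ 2 / 2`, and the
Cauchy–Schlömilch transformation applies: `s ↦ s - b / s` carries `(0, ∞)` onto `ℝ` with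
Jacobian `1 + b / s ^ 2`, and the summand `b / s ^ 2` is the Jacobian of the involution
`s ↦ b / s`, which merely reverses the sign of `s - b / s`. Hence, for even `f`, the integral of
`f (s - b / s)` over `(0, ∞)` does not depend on `b ≥ 0`. A parameter `a` of either sign is
reduced to `b = |a|` by `(l + a) ^ 2 = (l - |a|) ^ 2 + 4 * l * max 0 a`.
-/

section CauchySchlomilch

open Set

variable {b : ℝ}

lemma hasDerivAt_const_div (b : ℝ) {s : ℝ} (hs : s ≠ 0) :
    HasDerivAt (fun t ↦ b / t) (-(b / s ^ 2)) s := by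
  simpa [div_eq_mul_inv] using (hasDerivAt_inv hs).const_mul b

lemma hasDerivAt_sub_const_div (b : ℝ) {s : ℝ} (hs : s ≠ 0) :
    HasDerivAt (fun t ↦ t - b / t) (1 + b / s ^ 2) s := by
  simpa using! (hasDerivAt_id' s).sub (hasDerivAt_const_div b hs)

lemma antitoneOn_const_div (hb : 0 ≤ b) : AntitoneOn (fun s ↦ b / s) (Ioi 0) :=
  fun _ hs _ _ hst ↦ div_le_div_of_nonneg_left hb hs hst

lemma monotoneOn_sub_const_div (hb : 0 ≤ b) : MonotoneOn (fun s ↦ s - b / s) (Ioi 0) :=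
  fun _ hs _ ht hst ↦ sub_le_sub hst (antitoneOn_const_div hb hs ht hst)

lemma image_const_div_Ioi (hb : 0 < b) : (fun s ↦ b / s) '' Ioi 0 = Ioi 0 := by
  refine Subset.antisymm (image_subset_iff.2 fun s hs ↦ div_pos hb hs) fun s hs ↦ ?_
  exact ⟨b / s, div_pos hb hs, div_div_cancel₀ hb.ne'⟩

lemma image_sub_const_div_Ioi (hb : 0 < b) : (fun s ↦ s - b / s) '' Ioi 0 = univ := by
  refine eq_univ_of_forall fun u ↦ ?_
  have hdisc : √(u ^ 2 + 4 * b) ^ 2 = u ^ 2 + 4 * b := sq_sqrt (by positivity)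
  have hlt : |u| < √(u ^ 2 + 4 * b) := lt_sqrt_of_sq_lt (by rw [sq_abs]; linarith)
  -- the positive root of `s ^ 2 - u * s - b`
  have hpos : 0 < (u + √(u ^ 2 + 4 * b)) / 2 := by linarith [neg_abs_le u]
  refine ⟨_, hpos, ?_⟩
  rw [sub_eq_iff_eq_add, ← sub_eq_iff_eq_add', eq_div_iff hpos.ne']
  linarith

variable {E : Type*} [NormedAddCommGroup E] [NormedSpace ℝ E]

lemma integral_Ioi_comp_const_div (hb : 0 < b) (f : ℝ → E) :
    ∫ s in Ioi 0, (b / s ^ 2) • f (b / s) = ∫ s in Ioi 0, f s := by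
  have := integral_image_eq_integral_deriv_smul_of_antitoneOn measurableSet_Ioi
    (fun s hs ↦ (hasDerivAt_const_div b (ne_of_gt hs)).hasDerivWithinAt)
    (antitoneOn_const_div hb.le) f
  simpa only [image_const_div_Ioi hb, neg_neg] using this.symm

lemma integral_Ioi_deriv_smul_comp_sub_const_div (hb : 0 < b) (f : ℝ → E) :
    ∫ s in Ioi 0, (1 + b / s ^ 2) • f (s - b / s) = ∫ u, f u := by
  have := integral_image_eq_integral_deriv_smul_of_monotoneOn measurableSet_Ioi
    (fun s hs ↦ (hasDerivAt_sub_const_div b (ne_of_gt hs)).hasDerivWithinAt)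
    (monotoneOn_sub_const_div hb.le) f
  simpa only [image_sub_const_div_Ioi hb, setIntegral_univ] using this.symm

lemma integrableOn_Ioi_deriv_smul_comp_sub_const_div (hb : 0 < b) {f : ℝ → E}
    (hf : Integrable f) : IntegrableOn (fun s ↦ (1 + b / s ^ 2) • f (s - b / s)) (Ioi 0) := by
  rw [← integrableOn_image_iff_integrableOn_deriv_smul_of_monotoneOn measurableSet_Ioi
    (fun s hs ↦ (hasDerivAt_sub_const_div b (ne_of_gt hs)).hasDerivWithinAt)
    (monotoneOn_sub_const_div hb.le)]
  exact hf.integrableOn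

lemma integrableOn_Ioi_comp_sub_const_div (hb : 0 < b) {f : ℝ → E} (hf : Integrable f) :
    IntegrableOn (fun s ↦ f (s - b / s)) (Ioi 0) := by
  have hjac (s : ℝ) : 1 ≤ 1 + b / s ^ 2 := le_add_of_nonneg_right (by positivity)
  have hbound (s : ℝ) : ‖(1 + b / s ^ 2)⁻¹‖ ≤ 1 := by
    rw [norm_inv, norm_of_nonneg (zero_le_one.trans (hjac s))]
    exact inv_le_one_of_one_le₀ (hjac s)
  refine ((integrableOn_Ioi_deriv_smul_comp_sub_const_div hb hf).bdd_smul 1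
    (φ := fun s ↦ (1 + b / s ^ 2)⁻¹) (Measurable.aestronglyMeasurable (by fun_prop))
    (ae_of_all _ hbound)).congr
    (ae_of_all _ fun s ↦ ?_)
  exact inv_smul_smul₀ (zero_lt_one.trans_le (hjac s)).ne' _

theorem integral_Ioi_comp_sub_const_div_add (hb : 0 ≤ b) {f : ℝ → E} (hf : Integrable f) :
    (∫ s in Ioi 0, f (s - b / s)) + ∫ s in Ioi 0, f (b / s - s) = ∫ u, f u := by
  rcases hb.eq_or_lt with rfl | hb
  · simp only [zero_div, sub_zero, zero_sub, integral_comp_neg_Ioi, neg_zero]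
    rw [add_comm, intervalIntegral.integral_Iic_add_Ioi hf.integrableOn hf.integrableOn]
  have hint := integrableOn_Ioi_comp_sub_const_div hb hf
  calc
    _ = (∫ s in Ioi 0, f (s - b / s)) + ∫ s in Ioi 0, (b / s ^ 2) • f (s - b / s) := by
      rw [← integral_Ioi_comp_const_div hb fun s ↦ f (b / s - s)]
      simp only [div_div_cancel₀ hb.ne']
    _ = ∫ s in Ioi 0, (1 + b / s ^ 2) • f (s - b / s) := by
      rw [← integral_add hint]
      · simp only [add_smul, one_smul]
      · refine ((integrableOn_Ioi_deriv_smul_comp_sub_const_div hb hf).sub hint).congr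
          (ae_of_all _ fun s ↦ ?_)
        simp [add_smul]
    _ = ∫ u, f u := integral_Ioi_deriv_smul_comp_sub_const_div hb f

theorem two_smul_integral_Ioi_comp_sub_const_div_of_even (hb : 0 ≤ b) {f : ℝ → E}
    (heven : f.Even) (hf : Integrable f) :
    (2 : ℝ) • ∫ s in Ioi 0, f (s - b / s) = ∫ u, f u := by
  rw [← integral_Ioi_comp_sub_const_div_add hb hf, two_smul]
  simp only [← heven (b / _ - _), neg_sub]

lemma two_mul_integral_Ioi_exp_neg_mul_sub_const_div_sq {a : ℝ} (ha : 0 < a) (hb : 0 ≤ b) :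
    2 * ∫ s in Ioi 0, exp (-a * (s - b / s) ^ 2) = √(π / a) := by
  have heven : Function.Even fun u : ℝ ↦ exp (-a * u ^ 2) := fun u ↦ by simp only [neg_sq]
  rw [← integral_gaussian]
  exact two_smul_integral_Ioi_comp_sub_const_div_of_even hb heven (integrable_exp_neg_mul_sq ha)

end CauchySchlomilch

lemma integral_Ioi_inv_sqrt_smul {E : Type*} [NormedAddCommGroup E] [NormedSpace ℝ E]
    (f : ℝ → E) :
    ∫ l in Set.Ioi 0, (1 / √l) • f l = (2 : ℝ) • ∫ s in Set.Ioi 0, f (s ^ 2) := by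
  rw [← integral_comp_rpow_Ioi_of_pos two_pos, ← integral_smul]
  refine setIntegral_congr_fun measurableSet_Ioi fun s (hs : 0 < s) ↦ ?_
  norm_num [smul_smul, sqrt_sq hs.le, hs.ne']

lemma integral_Ioi_inv_sqrt_mul_exp_neg_sub_sq_div {b : ℝ} (hb : 0 ≤ b) :
    ∫ l in Set.Ioi 0, 1 / √l * exp (-(l - b) ^ 2 / (2 * l)) = √(2 * π) := by
  have hexp : ∀ s ∈ Set.Ioi (0 : ℝ), exp (-(s ^ 2 - b) ^ 2 / (2 * s ^ 2)) =
      exp (-(1 / 2) * (s - b / s) ^ 2) := by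
    intro s (hs : 0 < s)
    congr 1
    field_simp
  calc
    _ = 2 * ∫ s in Set.Ioi 0, exp (-(s ^ 2 - b) ^ 2 / (2 * s ^ 2)) :=
      integral_Ioi_inv_sqrt_smul fun l ↦ exp (-(l - b) ^ 2 / (2 * l))
    _ = 2 * ∫ s in Set.Ioi 0, exp (-(1 / 2) * (s - b / s) ^ 2) := by
      rw [setIntegral_congr_fun measurableSet_Ioi hexp]
    _ = √(2 * π) := by
      rw [two_mul_integral_Ioi_exp_neg_mul_sub_const_div_sq one_half_pos hb]
      congr 1
      ring

lemma add_sq_eq_sub_abs_sq_add (l a : ℝ) :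
    (l + a) ^ 2 = (l - |a|) ^ 2 + 4 * l * max 0 a := by
  rcases le_total 0 a with ha | ha
  · rw [abs_of_nonneg ha, max_eq_right ha]
    ring
  · rw [abs_of_nonpos ha, max_eq_left ha]
    ring

lemma exp_neg_add_sq_div {l : ℝ} (hl : l ≠ 0) (a : ℝ) :
    exp (-(l + a) ^ 2 / (2 * l)) = exp (-2 * max 0 a) * exp (-(l - |a|) ^ 2 / (2 * l)) := by
  rw [← exp_add, add_sq_eq_sub_abs_sq_add]
  congr 1
  field_simp
  ring

/-- Scale Mixture Representation, Lemma 2: for every `c ≥ 0` and `ζ ∈ ℝ`,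
`exp(-2c·max(0,ζ)) = ∫_0^∞ (2πλ)^{-1/2} exp(-(λ + cζ)²/(2λ)) dλ`. -/
theorem scale_mixture_representation (c : ℝ) (hc : 0 ≤ c) (ζ : ℝ) :
    Real.exp (-2 * c * max 0 ζ) =
      ∫ l in Set.Ioi (0 : ℝ),
        (1 / Real.sqrt (2 * Real.pi * l)) * Real.exp (-(l + c * ζ) ^ 2 / (2 * l)) := by
  have hpi : √(2 * π) ≠ 0 := by positivity
  have hmax : -2 * c * max 0 ζ = -2 * max 0 (c * ζ) := by
    rw [mul_assoc, mul_max_of_nonneg 0 ζ hc, mul_zero]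
  have hintegrand : ∀ l ∈ Set.Ioi (0 : ℝ),
      1 / √(2 * π * l) * exp (-(l + c * ζ) ^ 2 / (2 * l)) =
        exp (-2 * max 0 (c * ζ)) / √(2 * π) *
          (1 / √l * exp (-(l - |c * ζ|) ^ 2 / (2 * l))) := by
    intro l (hl : 0 < l)
    rw [exp_neg_add_sq_div hl.ne', sqrt_mul (by positivity)]
    ring
  rw [setIntegral_congr_fun measurableSet_Ioi hintegrand, integral_const_mul,
    integral_Ioi_inv_sqrt_mul_exp_neg_sub_sq_div (abs_nonneg _), div_mul_cancel₀ _ hpi, hmax]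
end

section
/- Let ν ≠ 0, c ∈ ℝ, ε ∈ ℝ, real responses y_1, …, y_D, positive reals λ_1, …, λ_D > 0 and ω_1, …, ω_D > 0, and vectors z̄_1, …, z̄_D ∈ ℝᴷ. Set ρ_d = 1/λ_d + 1/ω_d, ψ_d = (y_d − ε)/λ_d + (y_d + ε)/ω_d, A = ν⁻²I + c²∑_d ρ_d z̄_d z̄_dᵀ (which is positive definite, hence invertible), μ = A⁻¹ · (c² ∑_d ψ_d z̄_d), and for η ∈ ℝᴷ let Δ_d(η) = y_d − η⊤z̄_d. Then there exists a constant C ∈ ℝ, independent of η, such that for all η ∈ ℝᴷ: −∑_{k=1}^K η_k²/(2ν²) − ∑_{d=1}^D [ (λ_d + c(Δ_d(η) − ε))²/(2λ_d) + (ω_d − c(Δ_d(η) + ε))²/(2ω_d) ] = −(1/2)(η − μ)ᵀ A (η − μ) + C. -/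
open Matrix

/-!
With `t = c (Δ - ε)` the first square contributes `(λ + t)² / (2λ) = λ / 2 + t + t² / (2λ)`, and
similarly the second with `t = -c (Δ + ε)`. The linear terms add up to `-2cε`, so the residual
enters only through its squares; together with the prior, the negated exponent is a quadratic
polynomial in `η` with Hessian `A` and linear part `-c² ∑ ψ_d z̄_d`. As `A` is symmetric, the square
is completed at any solution `μ` of `A μ = c² ∑ ψ_d z̄_d`, and positive definiteness of `A` makes
`A⁻¹ (c² ∑ ψ_d z̄_d)` such a solution.
-/

section Scatter

variable {R ι κ : Type*} [Fintype ι]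

/-- The weighted scatter matrix `∑ d, w_d z_d z_dᵀ` of a family of vectors, the term by which the
data enter the posterior precision. It is neither centred nor normalized. -/
def scatterMatrix [CommSemiring R] (w : ι → R) (z : ι → κ → R) : Matrix κ κ R :=
  ∑ d, w d • vecMulVec (z d) (z d)

theorem isSymm_scatterMatrix [CommSemiring R] (w : ι → R) (z : ι → κ → R) :
    (scatterMatrix w z).IsSymm := by
  simp only [Matrix.IsSymm, scatterMatrix, transpose_sum, transpose_smul, transpose_vecMulVec]

theorem dotProduct_scatterMatrix_mulVec [CommSemiring R] [Fintype κ] (w : ι → R) (z : ι → κ → R)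
    (x : κ → R) : x ⬝ᵥ scatterMatrix w z *ᵥ x = ∑ d, w d * (x ⬝ᵥ z d) ^ 2 := by
  simp only [scatterMatrix, sum_mulVec, dotProduct_sum, smul_mulVec, vecMulVec_mulVec,
    op_smul_eq_smul, dotProduct_smul, smul_eq_mul, dotProduct_comm (z _) x, sq]

theorem posSemidef_scatterMatrix [CommRing R] [PartialOrder R] [StarRing R] [StarOrderedRing R]
    [TrivialStar R] [Finite κ] {w : ι → R} (hw : ∀ d, 0 ≤ w d) (z : ι → κ → R) :
    (scatterMatrix w z).PosSemidef :=
  posSemidef_sum _ fun d _ => by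
    simpa only [star_trivial] using (posSemidef_vecMulVec_self_star (z d)).smul (hw d)

end Scatter

section QuadraticForm

variable {K κ : Type*} [Field K] [Fintype κ]

theorem sum_sq_div_two_mul_eq_half_dotProduct_smul_one_mulVec [DecidableEq κ] (s : K) (x : κ → K) :
    ∑ k, x k ^ 2 / (2 * s) = 1 / 2 * (x ⬝ᵥ (s⁻¹ • (1 : Matrix κ κ K)) *ᵥ x) := by
  simp only [smul_mulVec, one_mulVec, dotProduct, Pi.smul_apply, smul_eq_mul, Finset.mul_sum]
  exact Finset.sum_congr rfl fun k _ => by ring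

theorem half_dotProduct_mulVec_sub_eq [NeZero (2 : K)] {A : Matrix κ κ K} (hA : A.IsSymm)
    {μ b : κ → K} (hμ : A *ᵥ μ = b) (x : κ → K) :
    1 / 2 * (x ⬝ᵥ A *ᵥ x) - x ⬝ᵥ b =
      1 / 2 * ((x - μ) ⬝ᵥ A *ᵥ (x - μ)) - 1 / 2 * (μ ⬝ᵥ b) := by
  have cross : μ ⬝ᵥ A *ᵥ x = x ⬝ᵥ b := by
    rw [dotProduct_mulVec, ← mulVec_transpose, hA.eq, hμ, dotProduct_comm]
  have two_ne : (2 : K) ≠ 0 := NeZero.ne 2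
  rw [mulVec_sub, dotProduct_sub, sub_dotProduct, sub_dotProduct, cross, hμ]
  field_simp
  ring

end QuadraticForm

section Exponent

variable {K : Type*} [Field K] [NeZero (2 : K)]

theorem add_sq_div_two_mul_self {l : K} (hl : l ≠ 0) (t : K) :
    (l + t) ^ 2 / (2 * l) = l / 2 + t + t ^ 2 / (2 * l) := by
  have two_ne : (2 : K) ≠ 0 := NeZero.ne 2
  field_simp
  ring

/-- The negated exponent of the augmented `ε`-insensitive pseudo-likelihood of one document, as a
function of the residual `Δ`, where `l` and `w` are the augmented variables `λ_d` and `ω_d`. -/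
def augmentedExponent (c ε l w Δ : K) : K :=
  (l + c * (Δ - ε)) ^ 2 / (2 * l) + (w - c * (Δ + ε)) ^ 2 / (2 * w)

theorem augmentedExponent_sub (c ε : K) {l w : K} (hl : l ≠ 0) (hw : w ≠ 0) (y s : K) :
    augmentedExponent c ε l w (y - s) = augmentedExponent c ε l w y +
      (1 / 2 * (c ^ 2 * ((1 / l + 1 / w) * s ^ 2)) -
        c ^ 2 * (((y - ε) / l + (y + ε) / w) * s)) := by
  have two_ne : (2 : K) ≠ 0 := NeZero.ne 2
  simp only [augmentedExponent, sub_eq_add_neg w, add_sq_div_two_mul_self hl,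
    add_sq_div_two_mul_self hw]
  field_simp
  ring

variable {ι κ : Type*} [Fintype ι] [Fintype κ]

theorem sum_augmentedExponent_sub (c ε : K) (y : ι → K) {lam ω : ι → K} (hlam : ∀ d, lam d ≠ 0)
    (hω : ∀ d, ω d ≠ 0) (z : ι → κ → K) {ρ ψ : ι → K} (hρ : ∀ d, ρ d = 1 / lam d + 1 / ω d)
    (hψ : ∀ d, ψ d = (y d - ε) / lam d + (y d + ε) / ω d) (η : κ → K) :
    ∑ d, augmentedExponent c ε (lam d) (ω d) (y d - η ⬝ᵥ z d) =
      ∑ d, augmentedExponent c ε (lam d) (ω d) (y d) +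
        (1 / 2 * (η ⬝ᵥ (c ^ 2 • scatterMatrix ρ z) *ᵥ η) - η ⬝ᵥ (c ^ 2 • ∑ d, ψ d • z d)) := by
  simp only [augmentedExponent_sub c ε (hlam _) (hω _), ← hρ, ← hψ, smul_mulVec, dotProduct_smul,
    dotProduct_scatterMatrix_mulVec, dotProduct_sum, smul_eq_mul, Finset.mul_sum,
    Finset.sum_add_distrib, Finset.sum_sub_distrib]

theorem gibbs_medlda_regression_eta_posterior_gaussian_general
    (c ε : K) (y : ι → K) {lam ω : ι → K} (hlam : ∀ d, lam d ≠ 0) (hω : ∀ d, ω d ≠ 0)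
    (z : ι → κ → K) {ρ ψ : ι → K} (hρ : ∀ d, ρ d = 1 / lam d + 1 / ω d)
    (hψ : ∀ d, ψ d = (y d - ε) / lam d + (y d + ε) / ω d)
    {P A : Matrix κ κ K} (hP : P.IsSymm) (hA : A = P + c ^ 2 • scatterMatrix ρ z)
    {μ : κ → K} (hμ : A *ᵥ μ = c ^ 2 • ∑ d, ψ d • z d) :
    ∃ C : K, ∀ η : κ → K,
      -(1 / 2 * (η ⬝ᵥ P *ᵥ η)) - ∑ d, augmentedExponent c ε (lam d) (ω d) (y d - η ⬝ᵥ z d) =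
        -(1 / 2) * ((η - μ) ⬝ᵥ A *ᵥ (η - μ)) + C := by
  have hA_symm : A.IsSymm := hA ▸ hP.add ((isSymm_scatterMatrix ρ z).smul _)
  refine ⟨1 / 2 * (μ ⬝ᵥ (c ^ 2 • ∑ d, ψ d • z d)) -
    ∑ d, augmentedExponent c ε (lam d) (ω d) (y d), fun η => ?_⟩
  have exponent := sum_augmentedExponent_sub c ε y hlam hω z hρ hψ η
  have square := half_dotProduct_mulVec_sub_eq hA_symm hμ η
  have precision : η ⬝ᵥ A *ᵥ η = η ⬝ᵥ P *ᵥ η + η ⬝ᵥ (c ^ 2 • scatterMatrix ρ z) *ᵥ η := by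
    rw [hA, add_mulVec, dotProduct_add]
  linear_combination -exponent - square + 1 / 2 * precision

end Exponent

/-- completing the square for the Gibbs MedLDA regression posterior,
Eq. (16) of the paper: with `ρ_d = 1/λ_d + 1/ω_d`,
`ψ_d = (y_d - ε)/λ_d + (y_d + ε)/ω_d`, `A = ν⁻²I + c²∑_d ρ_d z̄_d z̄_dᵀ`,
`μ = A⁻¹ (c² ∑_d ψ_d z̄_d)` and `Δ_d(η) = y_d - η⊤z̄_d`, there is a constant `C`
independent of `η` such that for all `η`,
`-∑_k η_k²/(2ν²) - ∑_d [(λ_d + c(Δ_d(η) - ε))²/(2λ_d) + (ω_d - c(Δ_d(η) + ε))²/(2ω_d)]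
  = -(1/2)(η - μ)ᵀA(η - μ) + C`. -/
theorem gibbs_medlda_regression_eta_posterior_gaussian {K D : ℕ}
    (ν c ε : ℝ) (hν : ν ≠ 0) (y : Fin D → ℝ)
    (lam ω : Fin D → ℝ) (hlam : ∀ d, 0 < lam d) (hω : ∀ d, 0 < ω d)
    (z : Fin D → Fin K → ℝ)
    (ρ ψ : Fin D → ℝ)
    (hρ : ∀ d, ρ d = 1 / lam d + 1 / ω d)
    (hψ : ∀ d, ψ d = (y d - ε) / lam d + (y d + ε) / ω d)
    (A : Matrix (Fin K) (Fin K) ℝ)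
    (hA : A = (ν ^ 2)⁻¹ • (1 : Matrix (Fin K) (Fin K) ℝ) +
        c ^ 2 • ∑ d, ρ d • Matrix.vecMulVec (z d) (z d))
    (μ : Fin K → ℝ)
    (hμ : μ = A⁻¹.mulVec (c ^ 2 • ∑ d, ψ d • z d)) :
    ∃ C : ℝ, ∀ η : Fin K → ℝ,
      -(∑ k, (η k) ^ 2 / (2 * ν ^ 2)) -
          ∑ d, ((lam d + c * ((y d - η ⬝ᵥ z d) - ε)) ^ 2 / (2 * lam d) +
                (ω d - c * ((y d - η ⬝ᵥ z d) + ε)) ^ 2 / (2 * ω d)) =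
        -(1 / 2) * ((η - μ) ⬝ᵥ A.mulVec (η - μ)) + C := by
  have hρ_nonneg (d) : 0 ≤ ρ d := by
    rw [hρ]
    exact add_nonneg (one_div_pos.2 (hlam d)).le (one_div_pos.2 (hω d)).le
  have prior_posDef : ((ν ^ 2)⁻¹ • (1 : Matrix (Fin K) (Fin K) ℝ)).PosDef :=
    PosDef.one.smul (by positivity)
  have hA_posDef : A.PosDef :=
    hA ▸ prior_posDef.add_posSemidef ((posSemidef_scatterMatrix hρ_nonneg z).smul (sq_nonneg c))
  have hAμ : A *ᵥ μ = c ^ 2 • ∑ d, ψ d • z d := by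
    rw [hμ, mulVec_mulVec, mul_nonsing_inv _ (A.isUnit_iff_isUnit_det.1 hA_posDef.isUnit),
      one_mulVec]
  simp only [sum_sq_div_two_mul_eq_half_dotProduct_smul_one_mulVec]
  exact gibbs_medlda_regression_eta_posterior_gaussian_general c ε y (fun d => (hlam d).ne')
    (fun d => (hω d).ne') z hρ hψ (isSymm_one.smul _) hA hAμ
end
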